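/- For every lattice path ν, the rotation poset of ν-trees is a lattice: every pair of ν-trees has a greatest lower bound and a least upper bound in the rotation poset. -/

import Mathlib

open scoped Classical

/-! Lattice paths: `true` = north step, `false` = east step. -/

def eastSteps (ν : List Bool) : ℕ := ν.count false
def northSteps (ν : List Bool) : ℕ := ν.count true

/-- Height at which the path first reaches abscissa `x`. -/
def heightAt : List Bool → ℕ → ℕ
  | _, 0 => 0
  | [], _ + 1 => 0
  | true :: rest, x + 1 => heightAt rest (x + 1) + 1
  | false :: rest, x + 1 => heightAt rest x

/-- Lattice point of a path after `i` steps. -/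
def pointAt (μ : List Bool) (i : ℕ) : ℕ × ℕ :=
  ((μ.take i).count false, (μ.take i).count true)

/-- The set `A_ν` of lattice points weakly above `ν`. -/
def APts (ν : List Bool) : Set (ℕ × ℕ) :=
  {p | p.1 ≤ eastSteps ν ∧ heightAt ν p.1 ≤ p.2 ∧ p.2 ≤ northSteps ν}

def Incompatible (ν : List Bool) (p q : ℕ × ℕ) : Prop :=
  (p.1 < q.1 ∧ p.2 < q.2 ∧ (q.1, p.2) ∈ APts ν) ∨
    (q.1 < p.1 ∧ q.2 < p.2 ∧ (p.1, q.2) ∈ APts ν)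

def Compatible (ν : List Bool) (p q : ℕ × ℕ) : Prop := ¬ Incompatible ν p q

def IsNuTree (ν : List Bool) (T : Set (ℕ × ℕ)) : Prop :=
  T ⊆ APts ν ∧ T.Pairwise (Compatible ν) ∧
    ∀ T', T' ⊆ APts ν → T'.Pairwise (Compatible ν) → T ⊆ T' → T' = T

def IsRightRotationAt (T T' : Set (ℕ × ℕ)) (q q' : ℕ × ℕ) : Prop :=
  ∃ x y x'' y', q = (x, y) ∧ q' = (x'', y') ∧ x < x'' ∧ y < y' ∧
    (x, y) ∈ T ∧ (x, y') ∈ T ∧ (x'', y) ∈ T ∧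
    (∀ b, y < b → b < y' → (x, b) ∉ T) ∧
    (∀ a, x < a → a < x'' → (a, y) ∉ T) ∧
    (∀ a, x < a → a < x'' → (a, y') ∉ T) ∧
    (∀ b, y < b → b < y' → (x'', b) ∉ T) ∧
    T' = (T \ {(x, y)}) ∪ {(x'', y')}

def IsRightRotation (T T' : Set (ℕ × ℕ)) : Prop :=
  ∃ q q', IsRightRotationAt T T' q q'

/-- Order relation of the rotation poset of ν-trees. -/
def TreeLE (ν : List Bool) : Set (ℕ × ℕ) → Set (ℕ × ℕ) → Prop :=
  Relation.ReflTransGen fun A B => IsNuTree ν A ∧ IsNuTree ν B ∧ IsRightRotation A B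

def IsNuPath (ν μ : List Bool) : Prop :=
  eastSteps μ = eastSteps ν ∧ northSteps μ = northSteps ν ∧
    ∀ i ≤ μ.length, pointAt μ i ∈ APts ν

noncomputable def horiz (ν : List Bool) (p : ℕ × ℕ) : ℕ :=
  sSup {k | (p.1 + k, p.2) ∈ APts ν}

/-- Covering relation of the ν-Tamari lattice. -/
def TamariCover (ν μ μ' : List Bool) : Prop :=
  IsNuPath ν μ ∧ IsNuPath ν μ' ∧
    ∃ i j, 0 < i ∧ i < j ∧ j ≤ μ.length ∧
      μ.getD (i - 1) true = false ∧ μ.getD i false = true ∧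
      horiz ν (pointAt μ j) = horiz ν (pointAt μ i) ∧
      (∀ k, i < k → k < j → horiz ν (pointAt μ k) ≠ horiz ν (pointAt μ i)) ∧
      μ' = μ.take (i - 1) ++ (μ.drop i).take (j - i) ++ [false] ++ μ.drop j

def TamariLE (ν : List Bool) : List Bool → List Bool → Prop :=
  Relation.ReflTransGen (TamariCover ν)

/-! Flushing maps -/

def rowAvail (ν : List Bool) (y : ℕ) : List ℕ :=
  ((List.range (eastSteps ν + 1)).filter fun x => decide (heightAt ν x ≤ y)).reverse

def pointsAtHeight (μ : List Bool) (y : ℕ) : ℕ :=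
  ((List.range (μ.length + 1)).filter fun i => decide ((μ.take i).count true = y)).length

def rflushAux (ν : List Bool) : List ℕ → ℕ → List ℕ → List (ℕ × ℕ)
  | [], _, _ => []
  | c :: rest, y, forbidden =>
    let placed := ((rowAvail ν y).filter fun x => decide (x ∉ forbidden)).take c
    placed.map (fun x => (x, y)) ++ rflushAux ν rest (y + 1) (forbidden ++ placed.dropLast)

/-- Right-flushing map `R`. -/
def Rflush (ν μ : List Bool) : Set (ℕ × ℕ) :=
  {p | p ∈ rflushAux ν ((List.range (northSteps ν + 1)).map (pointsAtHeight μ)) 0 []}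

def lflushAux (m : ℕ) : List ℕ → ℕ → List ℕ → List (ℕ × ℕ)
  | [], _, _ => []
  | c :: rest, y, forbidden =>
    let placed := ((List.range (m + 1)).filter fun x => decide (x ∉ forbidden)).take c
    placed.map (fun x => (x, y)) ++ lflushAux m rest (y + 1) (forbidden ++ placed.dropLast)

noncomputable def rowCount (T : Set (ℕ × ℕ)) (y : ℕ) : ℕ := {x | (x, y) ∈ T}.ncard

/-- Left-flushing map `L`. -/
noncomputable def Lflush (ν : List Bool) (T : Set (ℕ × ℕ)) : Set (ℕ × ℕ) :=
  {p | p ∈ lflushAux (eastSteps ν) ((List.range (northSteps ν + 1)).map (rowCount T)) 0 []}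

def pathPointSet (μ : List Bool) : Set (ℕ × ℕ) := {p | ∃ i ≤ μ.length, pointAt μ i = p}

/-! Bracket vectors (0-indexed positions `0,…,ℓ`). -/

noncomputable def fpos (ν : List Bool) (k : ℕ) : ℕ :=
  sSup {i | i ≤ ν.length ∧ (ν.take i).count true = k}

def bmin (ν : List Bool) : List ℕ :=
  (List.range (ν.length + 1)).map fun i => (ν.take i).count true

def IsBracketVector (ν : List Bool) (b : List ℕ) : Prop :=
  b.length = ν.length + 1 ∧
    (∀ k ≤ northSteps ν, b.getD (fpos ν k) 0 = k) ∧
    (∀ i < b.length, (bmin ν).getD i 0 ≤ b.getD i 0 ∧ b.getD i 0 ≤ northSteps ν) ∧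
    ∀ i j k, i < j → j < k → k < b.length →
      ¬(b.getD i 0 = b.getD k 0 ∧ b.getD i 0 < b.getD j 0)

noncomputable def leftChild (T : Set (ℕ × ℕ)) (p : ℕ × ℕ) : Option (ℕ × ℕ) :=
  if ∃ b, (p.1, b) ∈ T ∧ b < p.2 then some (p.1, sSup {b | (p.1, b) ∈ T ∧ b < p.2})
  else none

noncomputable def rightChild (T : Set (ℕ × ℕ)) (p : ℕ × ℕ) : Option (ℕ × ℕ) :=
  if ∃ a, (a, p.2) ∈ T ∧ p.1 < a then
    if ∃ b, (sInf {a | (a, p.2) ∈ T ∧ p.1 < a}, b) ∈ T ∧ p.2 < b then none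
    else some (sInf {a | (a, p.2) ∈ T ∧ p.1 < a}, p.2)
  else none

noncomputable def inorderAux (T : Set (ℕ × ℕ)) : ℕ → ℕ × ℕ → List (ℕ × ℕ)
  | 0, _ => []
  | fuel + 1, p =>
    (match leftChild T p with
      | none => []
      | some l => inorderAux T fuel l) ++ p ::
      (match rightChild T p with
        | none => []
        | some r => inorderAux T fuel r)

/-- Bracket vector of a ν-tree: y-coordinates read in in-order from the root `(0,n)`. -/
noncomputable def bracketOfTree (ν : List Bool) (T : Set (ℕ × ℕ)) : List ℕ :=
  (inorderAux T T.ncard (0, northSteps ν)).map Prod.snd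

noncomputable def bracketAssign (ν μ : List Bool) : List (ℕ × ℕ) :=
  ((List.range (northSteps ν + 1)).foldl
    (fun (st : List (ℕ × ℕ) × List ℕ) k =>
      let picked := ((st.2.filter fun i => decide (i ≤ fpos ν k)).reverse).take
        (pointsAtHeight μ k)
      (st.1 ++ picked.map fun i => (i, k), st.2.filter fun i => decide (i ∉ picked)))
    ([], List.range (ν.length + 1))).1

/-- Bracket vector of a ν-path. -/
noncomputable def bracketOfPath (ν μ : List Bool) : List ℕ :=
  (List.range (ν.length + 1)).map fun i => ((bracketAssign ν μ).lookup i).getD 0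

/-- Componentwise order on (equal length) integer vectors. -/
def listLE (b b' : List ℕ) : Prop :=
  b.length = b'.length ∧ ∀ i, b.getD i 0 ≤ b'.getD i 0

/-! Reversal -/

def revPath (ν : List Bool) : List Bool := ν.reverse.map fun s => !s

def revTree (ν : List Bool) (T : Set (ℕ × ℕ)) : Set (ℕ × ℕ) :=
  (fun p : ℕ × ℕ => (northSteps ν - p.2, eastSteps ν - p.1)) '' T

/-! Pipe dreams and subword complexes -/

def dOf (ν : List Bool) (p : ℕ × ℕ) : ℕ := p.1 + (northSteps ν - p.2)

def labelPerm (ν : List Bool) (p : ℕ × ℕ) : Equiv.Perm ℕ :=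
  Equiv.swap (dOf ν p + 1) (dOf ν p + 2)

/-- The points of `A_ν` in reading order: rows from bottom to top, each left to right. -/
def readingList (ν : List Bool) : List (ℕ × ℕ) :=
  ((List.range (northSteps ν + 1)).map fun y =>
    ((List.range (eastSteps ν + 1)).filter fun x => decide (heightAt ν x ≤ y)).map
      fun x => (x, y)).flatten

/-- The minimal ν-tree. -/
def TminSet (ν : List Bool) : Set (ℕ × ℕ) :=
  {p | p ∈ APts ν ∧ (p.1 = 0 ∨ ∃ i < ν.length, ν.getD i true = false ∧ p = pointAt ν (i + 1))}

noncomputable def prodOver (ν : List Bool) (C : Set (ℕ × ℕ)) : Equiv.Perm ℕ :=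
  (((readingList ν).filter fun p => decide (p ∈ C)).map (labelPerm ν)).prod

/-- Coxeter length: number of inversions. -/
noncomputable def lenInv (π : Equiv.Perm ℕ) : ℕ :=
  {q : ℕ × ℕ | q.1 < q.2 ∧ π q.2 < π q.1}.ncard

noncomputable def piNu (ν : List Bool) : Equiv.Perm ℕ := prodOver ν (APts ν \ TminSet ν)

def Qword (ν : List Bool) : List (Equiv.Perm ℕ) := (readingList ν).map (labelPerm ν)

noncomputable def prodAt (Q : List (Equiv.Perm ℕ)) (P : Finset ℕ) : Equiv.Perm ℕ :=
  (((List.range Q.length).filter fun i => decide (i ∈ P)).map fun i => Q.getD i 1).prod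

def IsFacet (Q : List (Equiv.Perm ℕ)) (π : Equiv.Perm ℕ) (I : Finset ℕ) : Prop :=
  I ⊆ Finset.range Q.length ∧
    prodAt Q (Finset.range Q.length \ I) = π ∧
    (Finset.range Q.length \ I).card = lenInv π

def IncFlip (Q : List (Equiv.Perm ℕ)) (π : Equiv.Perm ℕ) (I J : Finset ℕ) : Prop :=
  IsFacet Q π I ∧ IsFacet Q π J ∧ ∃ i ∈ I, ∃ j ∈ J, i < j ∧ I.erase i = J.erase j

def FlipLE (Q : List (Equiv.Perm ℕ)) (π : Equiv.Perm ℕ) : Finset ℕ → Finset ℕ → Prop :=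
  Relation.ReflTransGen (IncFlip Q π)

/-- The maximal ν-tree. -/
def TmaxSet (ν : List Bool) : Set (ℕ × ℕ) :=
  {p | (p.1 ≤ eastSteps ν ∧ p.2 = northSteps ν) ∨ ∃ i < ν.length, ν.getD i false = true ∧ p = pointAt ν i}

/-!
A ν-tree is determined by the heights of the topmost points of its columns, and the vectors of
column heights arising in this way are cut out by conditions stable under pointwise minima. Right
rotations raise column heights. Conversely, if `c < d` are two such vectors and `s` is the leftmost
column in which they differ, then rotating the tree of `c` at the left neighbour of the top of
column `s` raises `c s` and nothing else, and does not overshoot `d s`. Hence the rotation order is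
the pointwise order on column heights: greatest lower bounds are pointwise minima, and least upper
bounds are greatest lower bounds of sets of upper bounds.
-/

theorem heightAt_zero (ν : List Bool) : heightAt ν 0 = 0 := by
  cases ν <;> rfl

theorem heightAt_monotone (ν : List Bool) : Monotone (heightAt ν) := by
  refine monotone_nat_of_le_succ fun x => ?_
  induction ν generalizing x with
  | nil => cases x <;> exact le_rfl
  | cons b ν ih =>
    cases x with
    | zero => exact (heightAt_zero _).trans_le (Nat.zero_le _)
    | succ x => cases b with
      | false => exact ih x
      | true => exact Nat.succ_le_succ (ih (x + 1))

theorem heightAt_le_northSteps (ν : List Bool) (x : ℕ) : heightAt ν x ≤ northSteps ν := by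
  fun_induction heightAt ν x <;> simp_all [northSteps]

section Compatibility

variable {ν : List Bool} {T : Set (ℕ × ℕ)} {x y x' y' : ℕ} {p : ℕ × ℕ}

theorem mem_APts :
    (x, y) ∈ APts ν ↔ x ≤ eastSteps ν ∧ heightAt ν x ≤ y ∧ y ≤ northSteps ν :=
  Iff.rfl

instance : Std.Refl (Compatible ν) where
  refl p := by simp [Compatible, Incompatible]

instance : Std.Symm (Compatible ν) where
  symm _ _ := mt Or.symm

theorem compatible_iff (hp : (x, y) ∈ APts ν) (hq : (x', y') ∈ APts ν) :
    Compatible ν (x, y) (x', y') ↔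
      (x < x' → heightAt ν x' ≤ y → y' ≤ y) ∧ (x' < x → heightAt ν x ≤ y' → y ≤ y') := by
  grind [Compatible, Incompatible, mem_APts]

theorem pairwise_compatible_iff (hT : T ⊆ APts ν) :
    T.Pairwise (Compatible ν) ↔ ∀ ⦃x y x' y'⦄, (x, y) ∈ T → (x', y') ∈ T →
      x < x' → heightAt ν x' ≤ y → y' ≤ y := by
  refine ⟨fun h x y x' y' hp hq => ?_, fun h ⟨x, y⟩ hp ⟨x', y'⟩ hq _ => ?_⟩
  · exact ((compatible_iff (hT hp) (hT hq)).1 (h.of_refl hp hq)).1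
  · exact (compatible_iff (hT hp) (hT hq)).2 ⟨h hp hq, h hq hp⟩

namespace IsNuTree

theorem snd_le_snd (hT : IsNuTree ν T) (h : (x, y) ∈ T) (h' : (x', y') ∈ T) (hlt : x < x')
    (hy : heightAt ν x' ≤ y) : y' ≤ y :=
  (pairwise_compatible_iff hT.1).1 hT.2.1 h h' hlt hy

theorem mem_of_forall_compatible (hT : IsNuTree ν T) (hp : p ∈ APts ν)
    (h : ∀ q ∈ T, Compatible ν p q) : p ∈ T := by
  have hinsert : (insert p T).Pairwise (Compatible ν) :=
    hT.2.1.insert_of_symm fun q hq _ => h q hq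
  rw [← hT.2.2 _ (Set.insert_subset hp hT.1) hinsert (Set.subset_insert p T)]
  exact Set.mem_insert p T

theorem mem_of_forall_snd_le (hT : IsNuTree ν T) (hp : (x, y) ∈ APts ν)
    (hleft : ∀ w z, (w, z) ∈ T → w < x → heightAt ν x ≤ z → y ≤ z)
    (hright : ∀ w z, (w, z) ∈ T → x < w → heightAt ν w ≤ y → z ≤ y) : (x, y) ∈ T :=
  hT.mem_of_forall_compatible hp fun ⟨w, z⟩ hq =>
    (compatible_iff hp (hT.1 hq)).2 ⟨hright w z hq, hleft w z hq⟩

theorem root_mem (hT : IsNuTree ν T) : (0, northSteps ν) ∈ T :=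
  hT.mem_of_forall_snd_le (mem_APts.2 ⟨Nat.zero_le _, heightAt_le_northSteps ν 0, le_rfl⟩)
    (fun _ _ _ hw => absurd hw (Nat.not_lt_zero _)) fun _ _ hq _ _ => (hT.1 hq).2.2

theorem exists_mem_column (hT : IsNuTree ν T) (hx : x ≤ eastSteps ν) : ∃ y, (x, y) ∈ T := by
  -- The lowest row meeting `T` weakly to the left of column `x` also meets it in column `x`.
  have hrow : {y | heightAt ν x ≤ y ∧ ∃ a ≤ x, (a, y) ∈ T}.Nonempty :=
    ⟨northSteps ν, heightAt_le_northSteps ν x, 0, Nat.zero_le x, hT.root_mem⟩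
  obtain ⟨⟨hy, a, hax, ha⟩, hmin⟩ := hrow.isLeast_natFind
  refine ⟨_, hT.mem_of_forall_snd_le (mem_APts.2 ⟨hx, hy, (hT.1 ha).2.2⟩) ?_ ?_⟩
  · exact fun w z hq hlt hz => hmin ⟨hz, w, hlt.le, hq⟩
  · exact fun w z hq hlt hw => hT.snd_le_snd ha hq (hax.trans_lt hlt) hw

end IsNuTree

end Compatibility

/-- The vectors of heights of the topmost points of the columns of ν-trees: the tops lie in `A_ν`,
the first one is the root `(0, n)`, and they are pairwise ν-compatible. Entries beyond the last
column are set to `0`, so that `≤` on functions compares exactly the columns of `A_ν`. -/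
structure IsColumnVector (ν : List Bool) (c : ℕ → ℕ) : Prop where
  zero : c 0 = northSteps ν
  top_mem : ∀ ⦃x⦄, x ≤ eastSteps ν → (x, c x) ∈ APts ν
  le_of_lt : ∀ ⦃x z⦄, x < z → z ≤ eastSteps ν → heightAt ν z ≤ c x → c z ≤ c x
  eq_zero : ∀ ⦃x⦄, eastSteps ν < x → c x = 0

/-- The ν-tree with prescribed column tops `(x, c x)`: it consists of all points of `A_ν` that lie
weakly below the top of their column and are ν-compatible with every column top. -/
def treeOf (ν : List Bool) (c : ℕ → ℕ) : Set (ℕ × ℕ) :=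
  {p | p ∈ APts ν ∧ p.2 ≤ c p.1 ∧ ∀ x ≤ eastSteps ν, Compatible ν p (x, c x)}

/-- The height of the topmost point of `T` in column `x`, or `0` if this column is empty. -/
noncomputable def columnTop (T : Set (ℕ × ℕ)) (x : ℕ) : ℕ := sSup {y | (x, y) ∈ T}

/-- Column `a` is the nearest column to the left of `s` that is at least as tall as `s`. In the
tree of `c`, the left neighbour of the top `(s, c s)` in its row lies in column `a`. -/
structure IsParentColumn (c : ℕ → ℕ) (a s : ℕ) : Prop where
  lt : a < s
  le : c s ≤ c a
  lt_of_between : ∀ ⦃w⦄, a < w → w < s → c w < c s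

section ColumnVector

variable {ν : List Bool} {T : Set (ℕ × ℕ)} {c : ℕ → ℕ} {a s x y : ℕ}

theorem IsColumnVector.mem_treeOf (hc : IsColumnVector ν c) :
    (x, y) ∈ treeOf ν c ↔ x ≤ eastSteps ν ∧ heightAt ν x ≤ y ∧ y ≤ c x ∧
      (∀ w < x, heightAt ν x ≤ c w → y ≤ c w) ∧
      ∀ z, x < z → z ≤ eastSteps ν → heightAt ν z ≤ y → c z ≤ y := by
  refine ⟨fun ⟨hp, hle, hcomp⟩ => ⟨hp.1, hp.2.1, hle, fun w hw => ?_, fun z hz hzm => ?_⟩,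
    fun ⟨hx, hlow, hle, hleft, hright⟩ => ?_⟩
  · have hwm : w ≤ eastSteps ν := hw.le.trans hp.1
    exact ((compatible_iff hp (hc.top_mem hwm)).1 (hcomp w hwm)).2 hw
  · exact ((compatible_iff hp (hc.top_mem hzm)).1 (hcomp z hzm)).1 hz
  · have hp : (x, y) ∈ APts ν := mem_APts.2 ⟨hx, hlow, hle.trans (hc.top_mem hx).2.2⟩
    exact ⟨hp, hle, fun z hz => (compatible_iff hp (hc.top_mem hz)).2
      ⟨fun hxz => hright z hxz hz, hleft z⟩⟩

theorem IsColumnVector.top_mem_treeOf (hc : IsColumnVector ν c) (hx : x ≤ eastSteps ν) :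
    (x, c x) ∈ treeOf ν c :=
  hc.mem_treeOf.2 ⟨hx, (hc.top_mem hx).2.1, le_rfl, fun _ hw => hc.le_of_lt hw hx,
    fun _ hz hzm => hc.le_of_lt hz hzm⟩

theorem IsColumnVector.exists_isParentColumn (hc : IsColumnVector ν c) (hs : 0 < s)
    (hsm : s ≤ eastSteps ν) : ∃ a, IsParentColumn c a s := by
  have hne : {a | a < s ∧ c s ≤ c a}.Nonempty := ⟨0, hs, hc.zero ▸ (hc.top_mem hsm).2.2⟩
  obtain ⟨a, ⟨has, hca⟩, hmax⟩ :=
    BddAbove.exists_isGreatest_of_nonempty ⟨s, fun _ ha => ha.1.le⟩ hne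
  exact ⟨a, has, hca, fun w haw hws => not_le.1 fun hcw => haw.not_ge (hmax ⟨hws, hcw⟩)⟩

theorem IsParentColumn.mem_treeOf_iff (ha : IsParentColumn c a s) (hc : IsColumnVector ν c)
    (hs : s ≤ eastSteps ν) (hy : c s ≤ y) :
    (a, y) ∈ treeOf ν c ↔
      y ≤ c a ∧ ∀ z, s ≤ z → z ≤ eastSteps ν → heightAt ν z ≤ y → c z ≤ y := by
  obtain ⟨has, -, hbetween⟩ := ha
  have ham : a ≤ eastSteps ν := has.le.trans hs
  rw [hc.mem_treeOf]
  refine ⟨fun ⟨_, _, hya, _, hright⟩ => ⟨hya, fun z hz => hright z (has.trans_le hz)⟩,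
    fun ⟨hya, hright⟩ => ⟨ham, ?_, hya, fun w hw hlow => ?_, fun z hz hzm hlow => ?_⟩⟩
  · exact (heightAt_monotone ν has.le).trans ((hc.top_mem hs).2.1.trans hy)
  · exact hya.trans (hc.le_of_lt hw ham hlow)
  · rcases lt_or_ge z s with hzs | hzs
    · exact (hbetween hz hzs).le.trans hy
    · exact hright z hzs hzm hlow

theorem IsParentColumn.mem_treeOf (ha : IsParentColumn c a s) (hc : IsColumnVector ν c)
    (hs : s ≤ eastSteps ν) : (a, c s) ∈ treeOf ν c :=
  (ha.mem_treeOf_iff hc hs le_rfl).2 ⟨ha.le, fun _ hsz hzm hlow =>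
    hsz.eq_or_lt.elim (fun h => h ▸ le_rfl) fun h => hc.le_of_lt h hzm hlow⟩

theorem treeOf_subset_APts : treeOf ν c ⊆ APts ν := fun _ hp => hp.1

theorem IsColumnVector.pairwise_treeOf (hc : IsColumnVector ν c) :
    (treeOf ν c).Pairwise (Compatible ν) := by
  refine (pairwise_compatible_iff treeOf_subset_APts).2 fun x y x' y' hp hq hlt hlow => ?_
  obtain ⟨-, -, -, -, hright⟩ := hc.mem_treeOf.1 hp
  exact hq.2.1.trans (hright x' hlt hq.1.1 hlow)

theorem IsColumnVector.isNuTree_treeOf (hc : IsColumnVector ν c) : IsNuTree ν (treeOf ν c) := by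
  refine ⟨treeOf_subset_APts, hc.pairwise_treeOf, fun T hT hpair hsub => hsub.antisymm' ?_⟩
  rintro ⟨x, y⟩ hp
  refine ⟨hT hp, ?_, fun z hz => hpair.of_refl hp (hsub (hc.top_mem_treeOf hz))⟩
  rcases x.eq_zero_or_pos with rfl | hx
  · exact (hT hp).2.2.trans_eq hc.zero.symm
  · -- `(x, y)` is compatible with the left neighbour of the top of column `x`.
    obtain ⟨a, ha⟩ := hc.exists_isParentColumn hx (hT hp).1
    exact (pairwise_compatible_iff hT).1 hpair (hsub (ha.mem_treeOf hc (hT hp).1)) hp ha.lt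
      (hc.top_mem (hT hp).1).2.1

namespace IsNuTree

theorem isGreatest_columnTop (hT : IsNuTree ν T) (hx : x ≤ eastSteps ν) :
    IsGreatest {y | (x, y) ∈ T} (columnTop T x) :=
  have hbdd : BddAbove {y | (x, y) ∈ T} := ⟨northSteps ν, fun _ hy => (hT.1 hy).2.2⟩
  ⟨Nat.sSup_mem (hT.exists_mem_column hx) hbdd, fun _ hy => le_csSup hbdd hy⟩

theorem isColumnVector_columnTop (hT : IsNuTree ν T) : IsColumnVector ν (columnTop T) where
  zero :=
    have htop := hT.isGreatest_columnTop (Nat.zero_le _)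
    le_antisymm (hT.1 htop.1).2.2 (htop.2 hT.root_mem)
  top_mem _ hx := hT.1 (hT.isGreatest_columnTop hx).1
  le_of_lt _ _ hlt hz := hT.snd_le_snd (hT.isGreatest_columnTop (hlt.le.trans hz)).1
    (hT.isGreatest_columnTop hz).1 hlt
  eq_zero x hx := by
    have hempty : {y | (x, y) ∈ T} = ∅ :=
      Set.eq_empty_of_forall_notMem fun _ hy => hx.not_ge (hT.1 hy).1
    rw [columnTop, hempty, csSup_empty, bot_eq_zero]

theorem treeOf_columnTop (hT : IsNuTree ν T) : treeOf ν (columnTop T) = T :=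
  hT.2.2 _ treeOf_subset_APts hT.isColumnVector_columnTop.pairwise_treeOf fun _ hp =>
    ⟨hT.1 hp, (hT.isGreatest_columnTop (hT.1 hp).1).2 hp, fun _ hx =>
      hT.2.1.of_refl hp (hT.isGreatest_columnTop hx).1⟩

theorem exists_eq_treeOf (hT : IsNuTree ν T) : ∃ c, IsColumnVector ν c ∧ treeOf ν c = T :=
  ⟨columnTop T, hT.isColumnVector_columnTop, hT.treeOf_columnTop⟩

end IsNuTree

end ColumnVector

section Rotation

variable {ν : List Bool} {T T' : Set (ℕ × ℕ)} {c d : ℕ → ℕ} {a s v x y : ℕ}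

theorem IsRightRotation.exists_le_mem (h : IsRightRotation T T') (hp : (x, y) ∈ T) :
    ∃ z, y ≤ z ∧ (x, z) ∈ T' := by
  obtain ⟨-, -, a, b, a', b', -, -, -, hb, -, htop, -, -, -, -, -, rfl⟩ := h
  by_cases hxy : (x, y) = (a, b)
  · obtain ⟨rfl, rfl⟩ := Prod.mk.inj hxy
    exact ⟨b', hb.le, Or.inl ⟨htop, fun h => hb.ne' (Prod.mk.inj h).2⟩⟩
  · exact ⟨y, le_rfl, Or.inl ⟨hp, hxy⟩⟩

theorem TreeLE.exists_le_mem (h : TreeLE ν T T') (hp : (x, y) ∈ T) :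
    ∃ z, y ≤ z ∧ (x, z) ∈ T' := by
  induction h with
  | refl => exact ⟨y, le_rfl, hp⟩
  | tail _ hrot ih =>
    obtain ⟨z, hyz, hz⟩ := ih
    obtain ⟨w, hzw, hw⟩ := hrot.2.2.exists_le_mem hz
    exact ⟨w, hyz.trans hzw, hw⟩

theorem TreeLE.le_of_treeOf (h : TreeLE ν (treeOf ν c) (treeOf ν d)) (hc : IsColumnVector ν c) :
    c ≤ d := by
  intro x
  rcases le_or_gt x (eastSteps ν) with hx | hx
  · obtain ⟨z, hcz, hz⟩ := h.exists_le_mem (hc.top_mem_treeOf hx)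
    exact hcz.trans hz.2.1
  · exact (hc.eq_zero hx).trans_le (Nat.zero_le _)

/-- The situation in which the top of column `s` of the tree of `c` can be raised to height `v` by a
right rotation: it has a left neighbour, in column `a`, and `(a, v)` is the next point of the tree
above this neighbour. -/
structure IsRaise (ν : List Bool) (c : ℕ → ℕ) (a s v : ℕ) : Prop where
  isColumnVector : IsColumnVector ν c
  le_eastSteps : s ≤ eastSteps ν
  isParentColumn : IsParentColumn c a s
  isLeast : IsLeast {y | c s < y ∧ (a, y) ∈ treeOf ν c} v

namespace IsRaise

theorem isColumnVector_update (h : IsRaise ν c a s v) :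
    IsColumnVector ν (Function.update c s v) := by
  obtain ⟨hc, hs, ⟨has, hca, hbetween⟩, ⟨hsv, hv⟩, -⟩ := h
  obtain ⟨-, -, hva, -, hvright⟩ := hc.mem_treeOf.1 hv
  refine ⟨?_, fun x hx => ?_, fun x z hxz hz hlow => ?_, fun x hx => ?_⟩
  · rw [Function.update_of_ne (Nat.zero_lt_of_lt has).ne, hc.zero]
  · rcases eq_or_ne x s with rfl | hxs
    · rw [Function.update_self]
      exact ⟨hx, (hc.top_mem hx).2.1.trans hsv.le, hv.1.2.2⟩
    · rw [Function.update_of_ne hxs]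
      exact hc.top_mem hx
  · rcases eq_or_ne x s with rfl | hxs
    · rw [Function.update_self] at hlow ⊢
      rw [Function.update_of_ne hxz.ne']
      exact hvright z (has.trans hxz) hz hlow
    rw [Function.update_of_ne hxs] at hlow ⊢
    rcases eq_or_ne z s with rfl | hzs
    · rw [Function.update_self]
      have hcx := hc.le_of_lt hxz hs hlow
      have hxa : x ≤ a := not_lt.1 fun hax => (hbetween hax hxz).not_ge hcx
      rcases hxa.eq_or_lt with rfl | hxa
      · exact hva
      · exact hva.trans (hc.le_of_lt hxa (has.le.trans hs)
          ((heightAt_monotone ν has.le).trans hlow))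
    · rw [Function.update_of_ne hzs]
      exact hc.le_of_lt hxz hz hlow
  · rw [Function.update_of_ne (hs.trans_lt hx).ne']
    exact hc.eq_zero hx

theorem le_of_mem_treeOf (h : IsRaise ν c a s v) (hp : (x, y) ∈ treeOf ν c)
    (hne : (x, y) ≠ (a, c s)) (hxs : x < s) (hlow : heightAt ν s ≤ y) : v ≤ y := by
  obtain ⟨hc, hs, ⟨has, -, hbetween⟩, ⟨-, hv⟩, hmin⟩ := h
  have hsy : c s ≤ y := hc.isNuTree_treeOf.snd_le_snd hp (hc.top_mem_treeOf hs) hxs hlow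
  rcases lt_trichotomy x a with hxa | rfl | hax
  · exact hc.isNuTree_treeOf.snd_le_snd hp hv hxa ((heightAt_monotone ν has.le).trans hlow)
  · exact hmin ⟨hsy.lt_of_ne fun he => hne (by rw [he]), hp⟩
  · exact absurd (hsy.trans hp.2.1) (hbetween hax hxs).not_ge

theorem mem_treeOf_update_of_mem (h : IsRaise ν c a s v) (hp : (x, y) ∈ treeOf ν c)
    (hne : (x, y) ≠ (a, c s)) : (x, y) ∈ treeOf ν (Function.update c s v) := by
  have hle : c ≤ Function.update c s v := le_update_self_iff.2 h.isLeast.1.1.le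
  refine ⟨hp.1, hp.2.1.trans (hle x), fun z hz => ?_⟩
  rcases eq_or_ne z s with rfl | hzs
  · have htop := h.isColumnVector_update.top_mem hz
    rw [Function.update_self] at htop ⊢
    exact (compatible_iff hp.1 htop).2 ⟨h.le_of_mem_treeOf hp hne, fun hlt =>
      h.isColumnVector.isNuTree_treeOf.snd_le_snd h.isLeast.1.2 hp (h.isParentColumn.lt.trans hlt)⟩
  · rw [Function.update_of_ne hzs]
    exact hp.2.2 z hz

theorem le_top_of_mem_treeOf_update (h : IsRaise ν c a s v)
    (hp : (x, y) ∈ treeOf ν (Function.update c s v)) (hne : (x, y) ≠ (s, v)) : y ≤ c x := by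
  obtain ⟨-, -, hle, -, hright⟩ := h.isColumnVector_update.mem_treeOf.1 hp
  rcases eq_or_ne x s with rfl | hxs
  · rw [Function.update_self] at hle
    have hyv : y < v := hle.lt_of_ne fun he => hne (by rw [he])
    by_contra! hxy
    -- Otherwise `(a, y)` would be a point of the tree of `c` between `(a, c s)` and `(a, v)`.
    have hay : (a, y) ∈ treeOf ν c :=
      (h.isParentColumn.mem_treeOf_iff h.isColumnVector h.le_eastSteps hxy.le).2
        ⟨hle.trans h.isLeast.1.2.2.1, fun z hxz hz hlow => hxz.eq_or_lt.elim
          (fun he => he ▸ hxy.le) fun hlt => by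
            simpa only [Function.update_of_ne hlt.ne'] using hright z hlt hz hlow⟩
    exact hyv.not_ge (h.isLeast.2 ⟨hxy, hay⟩)
  · rwa [Function.update_of_ne hxs] at hle

theorem mem_of_mem_treeOf_update (h : IsRaise ν c a s v)
    (hp : (x, y) ∈ treeOf ν (Function.update c s v)) (hne : (x, y) ≠ (s, v)) :
    (x, y) ∈ treeOf ν c := by
  have hle := h.le_top_of_mem_treeOf_update hp hne
  refine ⟨hp.1, hle, fun z hz => ?_⟩
  rcases eq_or_ne z s with rfl | hzs
  · have hc := h.isColumnVector
    refine (compatible_iff hp.1 (hc.top_mem hz)).2 ⟨fun hlt hlow => ?_, fun hlt hlow => ?_⟩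
    · obtain ⟨-, -, -, -, hright⟩ := h.isColumnVector_update.mem_treeOf.1 hp
      have hvy := hright z hlt hz hlow
      rw [Function.update_self] at hvy
      exact h.isLeast.1.1.le.trans hvy
    · exact hle.trans (hc.le_of_lt hlt hp.1.1 hlow)
  · simpa only [Function.update_of_ne hzs] using hp.2.2 z hz

theorem notMem_treeOf_update (h : IsRaise ν c a s v) :
    (a, c s) ∉ treeOf ν (Function.update c s v) := by
  intro hp
  obtain ⟨-, -, -, -, hright⟩ := h.isColumnVector_update.mem_treeOf.1 hp
  have hvs := hright s h.isParentColumn.lt h.le_eastSteps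
    (h.isColumnVector.top_mem h.le_eastSteps).2.1
  rw [Function.update_self] at hvs
  exact h.isLeast.1.1.not_ge hvs

theorem treeOf_update (h : IsRaise ν c a s v) :
    treeOf ν (Function.update c s v) = (treeOf ν c \ {(a, c s)}) ∪ {(s, v)} := by
  ext ⟨x, y⟩
  refine ⟨fun hp => or_iff_not_imp_right.2 fun hne => ⟨h.mem_of_mem_treeOf_update hp hne, ?_⟩, ?_⟩
  · exact fun he => h.notMem_treeOf_update (he ▸ hp)
  · rintro (⟨hp, hne⟩ | hp)
    · exact h.mem_treeOf_update_of_mem hp hne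
    · have htop := h.isColumnVector_update.top_mem_treeOf h.le_eastSteps
      rw [Function.update_self] at htop
      exact hp ▸ htop

theorem isRightRotation (h : IsRaise ν c a s v) :
    IsRightRotation (treeOf ν c) (treeOf ν (Function.update c s v)) := by
  have ⟨hc, hs, ha, ⟨hsv, hv⟩, hmin⟩ := h
  refine ⟨(a, c s), (s, v), a, c s, s, v, rfl, rfl, ha.lt, hsv, ha.mem_treeOf hc hs, hv,
    hc.top_mem_treeOf hs, fun y hsy hyv hy => ?_, fun w haw hws hw => ?_, fun w haw hws hw => ?_,
    fun y hsy _ hy => ?_, h.treeOf_update⟩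
  · exact hyv.not_ge (hmin ⟨hsy, hy⟩)
  · exact (ha.lt_of_between haw hws).not_ge hw.2.1
  · exact ((ha.lt_of_between haw hws).trans hsv).not_ge hw.2.1
  · exact hsy.not_ge hy.2.1

end IsRaise

theorem IsColumnVector.exists_isRaise_of_lt (hc : IsColumnVector ν c) (hd : IsColumnVector ν d)
    (hcd : c < d) : ∃ a s v, IsRaise ν c a s v ∧ v ≤ d s := by
  obtain ⟨hle, hex⟩ := Pi.lt_def.1 hcd
  have hleft : {x | c x < d x}.Nonempty := hex
  obtain ⟨s, hlt, hmin⟩ : ∃ s, IsLeast {x | c x < d x} s := ⟨_, hleft.isLeast_natFind⟩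
  have heq : ∀ x < s, c x = d x := fun x hx =>
    (hle x).antisymm (not_lt.1 fun hx' => hx.not_ge (hmin hx'))
  have hsm : s ≤ eastSteps ν := by
    by_contra! hs
    exact (Nat.zero_le _).not_gt (hlt.trans_eq (hd.eq_zero hs))
  have hs : 0 < s := by
    refine Nat.pos_of_ne_zero ?_
    rintro rfl
    exact hlt.ne (hc.zero.trans hd.zero.symm)
  obtain ⟨a, ha⟩ := hc.exists_isParentColumn hs hsm
  -- `(a, d s)` lies in the tree of `c`, so the next point above `(a, c s)` is at most that high.
  have hda : d s ≤ c a := by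
    rw [heq a ha.lt]
    exact hd.le_of_lt ha.lt hsm ((hc.top_mem hsm).2.1.trans (ha.le.trans (hle a)))
  have hmem : (a, d s) ∈ treeOf ν c := by
    refine (ha.mem_treeOf_iff hc hsm hlt.le).2 ⟨hda, fun z hsz hz hlow => ?_⟩
    rcases hsz.eq_or_lt with rfl | hsz
    · exact hlt.le
    · exact (hle z).trans (hd.le_of_lt hsz hz hlow)
  have habove : {y | c s < y ∧ (a, y) ∈ treeOf ν c}.Nonempty := ⟨d s, hlt, hmem⟩
  exact ⟨a, s, _, ⟨hc, hsm, ha, habove.isLeast_natFind⟩, habove.isLeast_natFind.2 ⟨hlt, hmem⟩⟩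

theorem IsColumnVector.treeLE_treeOf_of_le (hc : IsColumnVector ν c) (hd : IsColumnVector ν d)
    (hcd : c ≤ d) : TreeLE ν (treeOf ν c) (treeOf ν d) := by
  induction hk : ∑ x ∈ Finset.range (eastSteps ν + 1), (d x - c x) using
    Nat.strong_induction_on generalizing c with
  | _ k ih =>
    rcases hcd.eq_or_lt with rfl | hlt
    · exact Relation.ReflTransGen.refl
    obtain ⟨a, s, v, h, hvd⟩ := hc.exists_isRaise_of_lt hd hlt
    have hsv : c s < v := h.isLeast.1.1
    have hle : c ≤ Function.update c s v := le_update_self_iff.2 hsv.le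
    have hdecr : ∑ x ∈ Finset.range (eastSteps ν + 1), (d x - Function.update c s v x) < k := by
      rw [← hk]
      refine Finset.sum_lt_sum (fun x _ => tsub_le_tsub_left (hle x) _)
        ⟨s, Finset.mem_range_succ_iff.2 h.le_eastSteps, ?_⟩
      rw [Function.update_self]
      exact tsub_lt_tsub_left_of_le hvd hsv
    exact .head ⟨hc.isNuTree_treeOf, h.isColumnVector_update.isNuTree_treeOf, h.isRightRotation⟩
      (ih _ hdecr h.isColumnVector_update (update_le_iff.2 ⟨hvd, fun x _ => hcd x⟩) rfl)

theorem treeLE_treeOf_iff (hc : IsColumnVector ν c) (hd : IsColumnVector ν d) :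
    TreeLE ν (treeOf ν c) (treeOf ν d) ↔ c ≤ d :=
  ⟨fun h => h.le_of_treeOf hc, hc.treeLE_treeOf_of_le hd⟩

end Rotation

theorem exists_mem_apply_eq_sInf_apply {ι : Type*} {α : ι → Type*}
    [∀ i, ConditionallyCompleteLinearOrder (α i)] {S : Set (∀ i, α i)} (hS : S.Nonempty) (i : ι)
    [WellFoundedLT (α i)] : ∃ c ∈ S, c i = sInf S i := by
  have : Nonempty S := hS.to_subtype
  obtain ⟨⟨c, hc⟩, h⟩ := ciInf_mem fun c : S => (c : ∀ i, α i) i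
  exact ⟨c, hc, h.trans sInf_apply.symm⟩

theorem IsColumnVector.sInf {ν : List Bool} {S : Set (ℕ → ℕ)} (hS : S.Nonempty)
    (h : ∀ c ∈ S, IsColumnVector ν c) : IsColumnVector ν (sInf S) := by
  refine ⟨?_, fun x hx => ?_, fun x z hxz hz hlow => ?_, fun x hx => ?_⟩
  · obtain ⟨c, hc, hcx⟩ := exists_mem_apply_eq_sInf_apply hS 0
    exact hcx ▸ (h c hc).zero
  · obtain ⟨c, hc, hcx⟩ := exists_mem_apply_eq_sInf_apply hS x
    exact hcx ▸ (h c hc).top_mem hx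
  · obtain ⟨c, hc, hcx⟩ := exists_mem_apply_eq_sInf_apply hS x
    rw [← hcx] at hlow ⊢
    exact (csInf_le (OrderBot.bddBelow S) hc z).trans ((h c hc).le_of_lt hxz hz hlow)
  · obtain ⟨c, hc, hcx⟩ := exists_mem_apply_eq_sInf_apply hS x
    exact hcx ▸ (h c hc).eq_zero hx

theorem exists_treeLE_glb {ν : List Bool} {𝒯 : Set (Set (ℕ × ℕ))} (hne : 𝒯.Nonempty)
    (h𝒯 : ∀ T ∈ 𝒯, IsNuTree ν T) :
    ∃ M, IsNuTree ν M ∧ (∀ T ∈ 𝒯, TreeLE ν M T) ∧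
      ∀ S, IsNuTree ν S → (∀ T ∈ 𝒯, TreeLE ν S T) → TreeLE ν S M := by
  let C : Set (ℕ → ℕ) := {c | IsColumnVector ν c ∧ treeOf ν c ∈ 𝒯}
  have hC : C.Nonempty := by
    obtain ⟨T, hT⟩ := hne
    obtain ⟨c, hc, rfl⟩ := (h𝒯 T hT).exists_eq_treeOf
    exact ⟨c, hc, hT⟩
  have hinf : IsColumnVector ν (sInf C) := .sInf hC fun c hc => hc.1
  refine ⟨treeOf ν (sInf C), hinf.isNuTree_treeOf, fun T hT => ?_, fun S hS hlower => ?_⟩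
  · obtain ⟨c, hc, rfl⟩ := (h𝒯 T hT).exists_eq_treeOf
    exact (treeLE_treeOf_iff hinf hc).2 (csInf_le (OrderBot.bddBelow C) ⟨hc, hT⟩)
  · obtain ⟨s, hs, rfl⟩ := hS.exists_eq_treeOf
    exact (treeLE_treeOf_iff hs hinf).2 <| le_csInf hC fun c hc =>
      (treeLE_treeOf_iff hs hc.1).1 (hlower _ hc.2)

theorem exists_treeLE_top (ν : List Bool) :
    ∃ J, IsNuTree ν J ∧ ∀ T, IsNuTree ν T → TreeLE ν T J := by
  let top : ℕ → ℕ := fun x => if x ≤ eastSteps ν then northSteps ν else 0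
  have htop : IsColumnVector ν top :=
    { zero := if_pos (Nat.zero_le _)
      top_mem x hx := by
        simpa only [top, if_pos hx] using mem_APts.2 ⟨hx, heightAt_le_northSteps ν x, le_rfl⟩
      le_of_lt x z hxz hz _ := by simp only [top, if_pos hz, if_pos (hxz.le.trans hz), le_refl]
      eq_zero x hx := if_neg hx.not_ge }
  refine ⟨treeOf ν top, htop.isNuTree_treeOf, fun T hT => ?_⟩
  obtain ⟨c, hc, rfl⟩ := hT.exists_eq_treeOf
  refine (treeLE_treeOf_iff hc htop).2 fun x => ?_
  rcases le_or_gt x (eastSteps ν) with hx | hx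
  · simpa only [top, if_pos hx] using (hc.top_mem hx).2.2
  · exact (hc.eq_zero hx).trans_le (Nat.zero_le _)

theorem rotation_poset_is_lattice (ν : List Bool) (T₁ T₂ : Set (ℕ × ℕ))
    (h₁ : IsNuTree ν T₁) (h₂ : IsNuTree ν T₂) :
    (∃ M, IsNuTree ν M ∧ TreeLE ν M T₁ ∧ TreeLE ν M T₂ ∧
      ∀ S, IsNuTree ν S → TreeLE ν S T₁ → TreeLE ν S T₂ → TreeLE ν S M) ∧
    (∃ J, IsNuTree ν J ∧ TreeLE ν T₁ J ∧ TreeLE ν T₂ J ∧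
      ∀ S, IsNuTree ν S → TreeLE ν T₁ S → TreeLE ν T₂ S → TreeLE ν J S) := by
  constructor
  · obtain ⟨M, hM, hle, hglb⟩ := exists_treeLE_glb (𝒯 := {T₁, T₂}) (Set.insert_nonempty _ _)
      (by rintro T (rfl | rfl) <;> assumption)
    refine ⟨M, hM, hle T₁ (.inl rfl), hle T₂ (.inr rfl), fun S hS hS₁ hS₂ => hglb S hS ?_⟩
    rintro T (rfl | rfl) <;> assumption
  · obtain ⟨top, htop, hmax⟩ := exists_treeLE_top ν
    obtain ⟨J, hJ, hle, hglb⟩ := exists_treeLE_glb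
      (𝒯 := {T | IsNuTree ν T ∧ TreeLE ν T₁ T ∧ TreeLE ν T₂ T})
      ⟨top, htop, hmax T₁ h₁, hmax T₂ h₂⟩ fun T hT => hT.1
    exact ⟨J, hJ, hglb T₁ h₁ fun T hT => hT.2.1, hglb T₂ h₂ fun T hT => hT.2.2,
      fun S hS hS₁ hS₂ => hle S ⟨hS, hS₁, hS₂⟩⟩
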